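/- If N ≥ 2 and the smallest empirical loss is strictly smallest, i.e. L̂_1 < L̂_2, then for every λ with 0 < λ ≤ m_1·(L̂_2 − L̂_1) one has p = 1 and the optimal weight vector is the vertex α(λ) = e_1, i.e. α_1(λ) = 1 and α_i(λ) = 0 for all i ≥ 2; the client with the lowest empirical risk receives all the weight. -/

import Mathlib

open Finset

noncomputable section

/-- `Mpart m k = Σ_{i=1}^k m_i`: total number of samples of the first `k` clients
(clients are 0-indexed, so these are clients `0, …, k-1`). -/
def Mpart (m : ℕ → ℝ) (k : ℕ) : ℝ := ∑ i ∈ Finset.range k, m i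

/-- `Lbar m L k = (Σ_{i=1}^k m_i·L̂_i) / M_k`: the `k`-average loss. -/
def Lbar (m L : ℕ → ℝ) (k : ℕ) : ℝ :=
  (∑ i ∈ Finset.range k, m i * L i) / Mpart m k

/-- The set `{ k ∈ {1, …, N} : 1 + M_k·(L̄_k − L̂_k)/λ > 0 }`
(with `L̂_k = L (k-1)` since losses are 0-indexed). -/
def goodSet (m L : ℕ → ℝ) (lam : ℝ) (N : ℕ) : Set ℕ :=
  {k | k ∈ Finset.Icc 1 N ∧ 0 < 1 + Mpart m k * (Lbar m L k - L (k - 1)) / lam}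

/-- `p = max{ k ∈ {1,…,N} : 1 + M_k·(L̄_k − L̂_k)/λ > 0 }`. -/
def pIdx (m L : ℕ → ℝ) (lam : ℝ) (N : ℕ) : ℕ := sSup (goodSet m L lam N)

/-- The optimal weights `α*_i = (m_i/M_p)·[1 + M_p·(L̄_p − L̂_i)/λ]₊` (client `i` 0-indexed). -/
def alphaStar (m L : ℕ → ℝ) (lam : ℝ) (N : ℕ) (i : ℕ) : ℝ :=
  (m i / Mpart m (pIdx m L lam N)) *
    max 0 (1 + Mpart m (pIdx m L lam N) * (Lbar m L (pIdx m L lam N) - L i) / lam)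

/-- The objective `F(α) = Σ_i α_i·L̂_i + (λ/2)·Σ_i α_i²/m_i`. -/
def objF (N : ℕ) (m L : ℕ → ℝ) (lam : ℝ) (α : ℕ → ℝ) : ℝ :=
  ∑ i ∈ Finset.range N, α i * L i + lam / 2 * ∑ i ∈ Finset.range N, (α i) ^ 2 / m i

/-!
For positive `M_k` one has `M_k (L̄_k − c) = Σ_{i ≤ k} m_i (L̂_i − c)`. With `c = L̂_k` every term is
nonpositive by sortedness, so for `k ≥ 2` the whole sum is at most its first term
`m_1 (L̂_1 − L̂_k) ≤ m_1 (L̂_1 − L̂_2) ≤ −λ`, and `k` fails the condition defining `p`, while `k = 1`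
gives the value `1 > 0`. Hence `p = 1` and `α_i = (m_i / m_1) [1 + m_1 (L̂_1 − L̂_i) / λ]₊`, where the
same inequality kills the positive part for every `i ≥ 2`.
-/

lemma one_add_div_nonpos_iff {K : Type*} [Field K] [LinearOrder K] [IsStrictOrderedRing K]
    {x c : K} (hc : 0 < c) : 1 + x / c ≤ 0 ↔ x ≤ -c := by
  rw [← le_neg_iff_add_nonpos_left, div_le_iff₀ hc, neg_one_mul]

section WeightedAverage

variable {m L : ℕ → ℝ} {k : ℕ}

lemma Mpart_pos (hk : 0 < k) (hm : ∀ i < k, 0 < m i) : 0 < Mpart m k :=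
  sum_pos (fun i hi => hm i (mem_range.1 hi)) (nonempty_range_iff.2 hk.ne')

lemma Mpart_one (m : ℕ → ℝ) : Mpart m 1 = m 0 :=
  sum_range_one m

lemma Lbar_one (L : ℕ → ℝ) (hm : m 0 ≠ 0) : Lbar m L 1 = L 0 := by
  rw [Lbar, Mpart_one, sum_range_one, mul_div_cancel_left₀ _ hm]

lemma Mpart_mul_Lbar_sub (L : ℕ → ℝ) (c : ℝ) (hM : Mpart m k ≠ 0) :
    Mpart m k * (Lbar m L k - c) = ∑ i ∈ range k, m i * (L i - c) :=
  calc Mpart m k * (Lbar m L k - c)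
      = ∑ i ∈ range k, m i * L i - Mpart m k * c := by
        rw [Lbar, mul_sub, mul_div_cancel₀ _ hM]
    _ = ∑ i ∈ range k, m i * (L i - c) := by
        simp only [Mpart, mul_sub, sum_sub_distrib, sum_mul]

lemma Mpart_mul_Lbar_sub_le {c : ℝ} {j : ℕ} (hj : j < k) (hM : Mpart m k ≠ 0)
    (hm : ∀ i < k, 0 ≤ m i) (hL : ∀ i < k, L i ≤ c) :
    Mpart m k * (Lbar m L k - c) ≤ m j * (L j - c) := by
  have hterm : ∀ i ∈ range k, 0 ≤ m i * (c - L i) := fun i hi =>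
    mul_nonneg (hm i (mem_range.1 hi)) (sub_nonneg.2 (hL i (mem_range.1 hi)))
  rw [Mpart_mul_Lbar_sub L c hM, ← neg_le_neg_iff, ← sum_neg_distrib]
  simpa only [← mul_neg, neg_sub] using single_le_sum hterm (mem_range.2 hj)

end WeightedAverage

section OptimalWeights

variable {m L : ℕ → ℝ} {lam : ℝ} {N : ℕ}

lemma one_mem_goodSet (hN : 1 ≤ N) (hm : m 0 ≠ 0) : 1 ∈ goodSet m L lam N :=
  ⟨mem_Icc.2 ⟨le_rfl, hN⟩, by simp [Lbar_one L hm]⟩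

lemma notMem_goodSet_of_le_mul_sub {j k : ℕ} (hlam : 0 < lam) (hj : j < k)
    (hm : ∀ i < k, 0 < m i) (hL : ∀ i < k, L i ≤ L (k - 1))
    (hgap : lam ≤ m j * (L (k - 1) - L j)) : k ∉ goodSet m L lam N := by
  rintro ⟨-, hpos⟩
  have hbound : Mpart m k * (Lbar m L k - L (k - 1)) ≤ -lam :=
    calc Mpart m k * (Lbar m L k - L (k - 1))
        ≤ m j * (L j - L (k - 1)) :=
          Mpart_mul_Lbar_sub_le hj (Mpart_pos (by lia) hm).ne' (fun i hi => (hm i hi).le) hL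
      _ ≤ -lam := by linarith
  exact hpos.not_ge ((one_add_div_nonpos_iff hlam).2 hbound)

lemma pIdx_eq_one (hN : 1 ≤ N) (hlam : 0 < lam) (hm : ∀ i < N, 0 < m i)
    (hL : ∀ i j, i ≤ j → j < N → L i ≤ L j)
    (hgap : ∀ j, 1 ≤ j → j < N → lam ≤ m 0 * (L j - L 0)) : pIdx m L lam N = 1 := by
  refine IsGreatest.csSup_eq ⟨one_mem_goodSet hN (hm 0 hN).ne', fun k hk => ?_⟩
  have hkN : k ≤ N := (mem_Icc.1 hk.1).2
  by_contra! hk1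
  exact notMem_goodSet_of_le_mul_sub hlam (by lia) (fun i hi => hm i (by lia))
    (fun i hi => hL i (k - 1) (by lia) (by lia)) (hgap (k - 1) (by lia) (by lia)) hk

lemma alphaStar_of_pIdx_eq_one (hm : m 0 ≠ 0) (hp : pIdx m L lam N = 1) (i : ℕ) :
    alphaStar m L lam N i = m i / m 0 * max 0 (1 + m 0 * (L 0 - L i) / lam) := by
  rw [alphaStar, hp, Mpart_one, Lbar_one L hm]

end OptimalWeights

/-- if `N ≥ 2` and `L̂_1 < L̂_2`, then for `0 < λ ≤ m_1·(L̂_2 − L̂_1)`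
one has `p = 1` and `α(λ) = e_1`: the client with the lowest empirical risk receives
all the weight. -/
theorem alphaStar_small_lambda
    (N : ℕ) (hN : 2 ≤ N) (m L : ℕ → ℝ)
    (hm : ∀ i < N, 0 < m i)
    (hL : ∀ i j, i ≤ j → j < N → L i ≤ L j)
    (hgap : L 0 < L 1) :
    ∀ lam : ℝ, 0 < lam → lam ≤ m 0 * (L 1 - L 0) →
      pIdx m L lam N = 1 ∧
      alphaStar m L lam N 0 = 1 ∧
      ∀ i, 1 ≤ i → i < N → alphaStar m L lam N i = 0 := by
  intro lam hlam hle
  have hm0 : 0 < m 0 := hm 0 (by lia)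
  have hfar : ∀ j, 1 ≤ j → j < N → lam ≤ m 0 * (L j - L 0) := fun j hj hjN =>
    hle.trans (by gcongr; exact hL 1 j hj hjN)
  have hp : pIdx m L lam N = 1 := pIdx_eq_one (by lia) hlam hm hL hfar
  have hα := alphaStar_of_pIdx_eq_one hm0.ne' hp
  refine ⟨hp, ?_, fun i hi hiN => ?_⟩
  · simp [hα, hm0.ne']
  · have hneg : m 0 * (L 0 - L i) ≤ -lam := by linarith [hfar i hi hiN]
    rw [hα, max_eq_left ((one_add_div_nonpos_iff hlam).2 hneg), mul_zero]
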